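/- g₁ is a strictly increasing bijection from ℝ onto (0, ∞). Moreover, for every π ∈ (0,1), m > 0, and δ > 0, there exists exactly one ρ ∈ (0,1) satisfying π·δ·g(ρ/(2πmδ)) + (1−π)·δ·g(ρ/(2(1−π)mδ)) = 1 − ρ². -/

import Mathlib

open MeasureTheory

/-- The standard normal density. -/
noncomputable def normPDF (x : ℝ) : ℝ := Real.exp (-x ^ 2 / 2) / Real.sqrt (2 * Real.pi)

/-- The standard normal cumulative distribution function. -/
noncomputable def normCDF (x : ℝ) : ℝ := ∫ t in Set.Iic x, normPDF t

/-- `g₁(x) = x·Φ(x) + φ(x)`, equal to `E[(Z+x)₊]` for standard normal `Z`. -/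
noncomputable def g1 (x : ℝ) : ℝ := x * normCDF x + normPDF x

/-- `g₂(x) = (x²+1)·Φ(x) + x·φ(x)`, equal to `E[(Z+x)₊²]` for standard normal `Z`. -/
noncomputable def g2 (x : ℝ) : ℝ := (x ^ 2 + 1) * normCDF x + x * normPDF x

/-- The inverse of `g₁` (on its range `(0,∞)`). -/
noncomputable def g1inv : ℝ → ℝ := Function.invFun g1

/-- `g = g₂ ∘ g₁⁻¹`. -/
noncomputable def gfn (t : ℝ) : ℝ := g2 (g1inv t)

open Filter Topology Set

lemma sqrt_two_pi_ge : (1:ℝ) ≤ Real.sqrt (2 * Real.pi) := by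
  rw [Real.one_le_sqrt]
  nlinarith [Real.pi_gt_three]

lemma pdf_pos (x : ℝ) : 0 < normPDF x := by
  have := sqrt_two_pi_ge
  unfold normPDF
  positivity

lemma pdf_deriv (x : ℝ) : HasDerivAt normPDF (-x * normPDF x) x := by
  have h : HasDerivAt (fun x : ℝ => -x ^ 2 / 2) (-x) x := by
    have := ((hasDerivAt_pow 2 x).neg).div_const 2
    exact this.congr_deriv (by simp; ring)
  have := (h.exp).div_const (Real.sqrt (2 * Real.pi))
  exact this.congr_deriv (by unfold normPDF; ring)

lemma pdf_cont : Continuous normPDF :=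
  continuous_iff_continuousAt.2 fun x => (pdf_deriv x).continuousAt

lemma pdf_integrable : Integrable normPDF := by
  have := (integrable_exp_neg_mul_sq (b := 1/2) (by norm_num)).div_const (Real.sqrt (2 * Real.pi))
  refine this.congr (Eventually.of_forall fun x => ?_)
  simp only [normPDF]
  congr 2
  ring

lemma xpdf_integrable : Integrable (fun x => -x * normPDF x) := by
  have := ((integrable_mul_exp_neg_mul_sq (b := 1/2) (by norm_num)).div_const
    (Real.sqrt (2 * Real.pi))).neg
  refine this.congr (Eventually.of_forall fun x => ?_)
  simp only [normPDF, Pi.neg_apply]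
  rw [show -(1/2) * x^2 = -x^2/2 by ring]
  ring

lemma pdf_bound (x : ℝ) : normPDF x * (1 + x ^ 2 / 2) ≤ 1 := by
  have h1 := sqrt_two_pi_ge
  have h2 := Real.add_one_le_exp (x ^ 2 / 2)
  have h3 : normPDF x ≤ Real.exp (-x ^ 2 / 2) :=
    div_le_self (Real.exp_pos _).le h1
  have h4 : Real.exp (-x ^ 2 / 2) * Real.exp (x ^ 2 / 2) = 1 := by
    rw [← Real.exp_add, ← Real.exp_zero]
    congr 1
    ring
  calc normPDF x * (1 + x ^ 2 / 2) ≤ Real.exp (-x ^ 2 / 2) * Real.exp (x ^ 2 / 2) := by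
        apply mul_le_mul h3 (by linarith) (by positivity) (Real.exp_pos _).le
    _ = 1 := h4

lemma pdf_small {ε : ℝ} (hε : 0 < ε) : ∃ X ≤ (-1 : ℝ), ∀ x ≤ X, normPDF x < ε := by
  refine ⟨-(1 + 1 / ε), ?_, fun x hx => ?_⟩
  · have : 0 < 1 / ε := by positivity
    linarith
  · by_contra! h
    have h1 := pdf_bound x
    have h0 : 0 < 1 / ε := by positivity
    have h2 : (1 + 1 / ε) ^ 2 ≤ x ^ 2 := by nlinarith
    have h3 : ε * (1 + x ^ 2 / 2) ≤ 1 := by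
      refine le_trans ?_ h1
      gcongr
    have h4 : ε * (1 / ε) = 1 := by field_simp
    have h5 : ε * (1 + 1 / ε) ^ 2 ≤ ε * x ^ 2 := by gcongr
    nlinarith

lemma pdf_tendsto : Tendsto normPDF atBot (𝓝 0) := by
  rw [Metric.tendsto_nhds]
  intro ε hε
  obtain ⟨X, -, hX⟩ := pdf_small hε
  filter_upwards [eventually_le_atBot X] with x hx
  rw [Real.dist_eq, sub_zero, abs_of_pos (pdf_pos x)]
  exact hX x hx

lemma cdf_deriv (x : ℝ) : HasDerivAt normCDF (normPDF x) x := by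
  have h : normCDF = fun y => normCDF 0 + ∫ t in (0:ℝ)..y, normPDF t := by
    funext y
    rw [← intervalIntegral.integral_Iic_sub_Iic pdf_integrable.integrableOn
      pdf_integrable.integrableOn]
    simp [normCDF]
  rw [h]
  exact (pdf_cont.integral_hasStrictDerivAt 0 x).hasDerivAt.const_add _

lemma cdf_nonneg (x : ℝ) : 0 ≤ normCDF x :=
  setIntegral_nonneg measurableSet_Iic fun t _ => (pdf_pos t).le

lemma cdf_strictMono : StrictMono normCDF :=
  strictMono_of_deriv_pos fun x => by
    rw [(cdf_deriv x).deriv]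
    exact pdf_pos x

lemma cdf_pos (x : ℝ) : 0 < normCDF x :=
  (cdf_nonneg (x - 1)).trans_lt (cdf_strictMono (by linarith))

lemma mills (x : ℝ) : -x * normCDF x ≤ normPDF x := by
  have h := integral_Iic_of_hasDerivAt_of_tendsto' (a := x) (fun y _ => pdf_deriv y)
    xpdf_integrable.integrableOn pdf_tendsto
  rw [sub_zero] at h
  rw [← h, normCDF, ← integral_const_mul]
  refine setIntegral_mono_on (pdf_integrable.integrableOn.const_mul _)
    xpdf_integrable.integrableOn measurableSet_Iic fun t ht => ?_
  have := pdf_pos t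
  have : t ≤ x := ht
  gcongr

lemma g1_deriv (x : ℝ) : HasDerivAt g1 (normCDF x) x := by
  have := ((hasDerivAt_id x).mul (cdf_deriv x)).add (pdf_deriv x)
  exact this.congr_deriv (by simp)

lemma g1_strictMono : StrictMono g1 :=
  strictMono_of_deriv_pos fun x => by
    rw [(g1_deriv x).deriv]
    exact cdf_pos x

lemma g1_cont : Continuous g1 :=
  continuous_iff_continuousAt.2 fun x => (g1_deriv x).continuousAt

lemma g1_nonneg (x : ℝ) : 0 ≤ g1 x := by
  have := mills x
  unfold g1
  linarith

lemma g1_pos (x : ℝ) : 0 < g1 x :=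
  (g1_nonneg (x - 1)).trans_lt (g1_strictMono (by linarith))

lemma g1_le_pdf {x : ℝ} (hx : x ≤ 0) : g1 x ≤ normPDF x := by
  have := cdf_pos x
  unfold g1
  nlinarith

lemma g1_surj {t : ℝ} (ht : 0 < t) : ∃ x, g1 x = t := by
  obtain ⟨X, hX1, hX⟩ := pdf_small ht
  have ha : g1 X ≤ t := (g1_le_pdf (by linarith)).trans (hX X le_rfl).le
  have h0 := cdf_pos 0
  have hY : 0 ≤ t / normCDF 0 := by positivity
  have hb : t ≤ g1 (t / normCDF 0) := by
    have h1 := cdf_strictMono.monotone hY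
    have h2 := pdf_pos (t / normCDF 0)
    have h3 : t / normCDF 0 * normCDF 0 = t := by field_simp
    have h4 := mul_le_mul_of_nonneg_left h1 hY
    unfold g1
    linarith
  obtain ⟨x, -, hx⟩ := intermediate_value_Icc (by linarith : X ≤ t / normCDF 0)
    g1_cont.continuousOn ⟨ha, hb⟩
  exact ⟨x, hx⟩

lemma g2_deriv (x : ℝ) : HasDerivAt g2 (2 * g1 x) x := by
  have := (((hasDerivAt_pow 2 x).add_const 1).mul (cdf_deriv x)).add
    ((hasDerivAt_id x).mul (pdf_deriv x))
  exact this.congr_deriv (by simp [g1]; ring)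

lemma g2_strictMono : StrictMono g2 :=
  strictMono_of_deriv_pos fun x => by
    rw [(g2_deriv x).deriv]
    have := g1_pos x
    positivity

lemma g2_cont : Continuous g2 :=
  continuous_iff_continuousAt.2 fun x => (g2_deriv x).continuousAt

lemma g2_eq (x : ℝ) : g2 x = x * g1 x + normCDF x := by
  unfold g2 g1
  ring

lemma g2_le_pdf {x : ℝ} (hx : x ≤ -1) : g2 x ≤ normPDF x := by
  have h1 := mills x
  have h2 := g1_pos x
  have h3 := cdf_pos x
  rw [g2_eq]
  nlinarith

lemma g2_nonneg (y : ℝ) : 0 ≤ g2 y := by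
  by_contra! h
  obtain ⟨c, hc, hcy⟩ : ∃ c > 0, g2 y = -c := ⟨-g2 y, by linarith, by ring⟩
  have h2c : 0 < 2 / c := by positivity
  obtain ⟨x, hxy, hxc⟩ : ∃ x, x ≤ y ∧ x ≤ -(2 / c) :=
    ⟨min y (-(2 / c)), min_le_left _ _, min_le_right _ _⟩
  have h1 := g2_strictMono.monotone hxy
  have hx0 : x < 0 := by linarith
  have h2 := g1_le_pdf hx0.le
  have h3 := cdf_pos x
  have h4 := pdf_bound x
  have h5 : x * normPDF x ≤ -c := by
    rw [g2_eq x] at h1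
    nlinarith
  have h6 : c * (1 + x ^ 2 / 2) ≤ -x := by
    have h7 : c * (1 + x ^ 2 / 2) ≤ (-x * normPDF x) * (1 + x ^ 2 / 2) := by
      gcongr
      linarith
    have h8 : -x * (normPDF x * (1 + x ^ 2 / 2)) ≤ -x * 1 := by
      apply mul_le_mul_of_nonneg_left h4
      linarith
    linarith
  have h9 : c * (2 / c) = 2 := by field_simp
  have h10 : 2 ≤ c * (-x) := by
    rw [← h9]
    gcongr
    linarith
  nlinarith

lemma g2_pos (x : ℝ) : 0 < g2 x :=
  (g2_nonneg (x - 1)).trans_lt (g2_strictMono (by linarith))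

lemma g1inv_right {t : ℝ} (ht : 0 < t) : g1 (g1inv t) = t :=
  Function.invFun_eq (g1_surj ht)

lemma g1inv_left (x : ℝ) : g1inv (g1 x) = x :=
  Function.leftInverse_invFun g1_strictMono.injective x

lemma g1inv_strictMonoOn : StrictMonoOn g1inv (Ioi 0) := by
  intro a ha b hb hab
  rw [← g1_strictMono.lt_iff_lt, g1inv_right ha, g1inv_right hb]
  exact hab

lemma g1inv_contAt {t : ℝ} (ht : 0 < t) : ContinuousAt g1inv t := by
  refine g1inv_strictMonoOn.continuousAt_of_image_mem_nhds (Ioi_mem_nhds ht) ?_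
  have : g1inv '' Ioi 0 = univ := eq_univ_of_forall fun x => ⟨g1 x, g1_pos x, g1inv_left x⟩
  rw [this]
  exact univ_mem

lemma gfn_strictMonoOn : StrictMonoOn gfn (Ioi 0) :=
  fun _ ha _ hb hab => g2_strictMono (g1inv_strictMonoOn ha hb hab)

lemma gfn_contAt {t : ℝ} (ht : 0 < t) : ContinuousAt gfn t :=
  g2_cont.continuousAt.comp (g1inv_contAt ht)

lemma gfn_pos (t : ℝ) : 0 < gfn t := g2_pos _

lemma gfn_small {ε : ℝ} (hε : 0 < ε) : ∃ T > 0, ∀ t, 0 < t → t ≤ T → gfn t < ε := by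
  obtain ⟨X, hX1, hX⟩ := pdf_small hε
  refine ⟨g1 X, g1_pos X, fun t ht htT => ?_⟩
  have h1 : gfn t ≤ gfn (g1 X) := gfn_strictMonoOn.monotoneOn ht (g1_pos X) htT
  have h2 : gfn (g1 X) = g2 X := by rw [gfn, g1inv_left]
  have := g2_le_pdf hX1
  have := hX X le_rfl
  linarith

lemma exists_unique_aux (a b c d : ℝ) (ha : 0 < a) (hb : 0 < b) (hc : 0 < c) (hd : 0 < d) :
    ∃! ρ : ℝ, ρ ∈ Ioo (0 : ℝ) 1 ∧ a * gfn (ρ / c) + b * gfn (ρ / d) = 1 - ρ ^ 2 := by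
  set F : ℝ → ℝ := fun ρ => a * gfn (ρ / c) + b * gfn (ρ / d) + ρ ^ 2 with hF
  have hmono : StrictMonoOn F (Ioi 0) := by
    intro x hx y hy hxy
    have hx : 0 < x := hx
    have hy : 0 < y := hy
    have h1 : gfn (x / c) < gfn (y / c) := gfn_strictMonoOn (div_pos hx hc) (div_pos hy hc)
      (by gcongr)
    have h2 : gfn (x / d) < gfn (y / d) := gfn_strictMonoOn (div_pos hx hd) (div_pos hy hd)
      (by gcongr)
    simp only [hF]
    gcongr
  have hcont : ∀ x, 0 < x → ContinuousAt F x := by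
    intro x hx
    have h1 : ContinuousAt (fun x => gfn (x / c)) x :=
      ContinuousAt.comp (f := fun x => x / c) (gfn_contAt (div_pos hx hc)) (by fun_prop)
    have h2 : ContinuousAt (fun x => gfn (x / d)) x :=
      ContinuousAt.comp (f := fun x => x / d) (gfn_contAt (div_pos hx hd)) (by fun_prop)
    exact ((h1.const_mul a).add (h2.const_mul b)).add (by fun_prop)
  obtain ⟨T, hT, hTs⟩ := gfn_small (ε := 1 / (2 * (a + b))) (by positivity)
  obtain ⟨r, hr0, hr1, hrc, hrd⟩ : ∃ r, 0 < r ∧ r ≤ 1/2 ∧ r ≤ T * c ∧ r ≤ T * d :=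
    ⟨min (1/2) (min (T * c) (T * d)), by positivity, min_le_left _ _,
      (min_le_right _ _).trans (min_le_left _ _), (min_le_right _ _).trans (min_le_right _ _)⟩
  have h1 := hTs (r / c) (by positivity) (by rwa [div_le_iff₀ hc])
  have h2 := hTs (r / d) (by positivity) (by rwa [div_le_iff₀ hd])
  have hFr : F r < 1 := by
    have h3 : a * (1 / (2 * (a + b))) + b * (1 / (2 * (a + b))) = 1 / 2 := by field_simp
    have h4 := mul_lt_mul_of_pos_left h1 ha
    have h5 := mul_lt_mul_of_pos_left h2 hb
    simp only [hF]
    nlinarith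
  have hF1 : 1 < F 1 := by
    have h4 := mul_pos ha (gfn_pos (1 / c))
    have h5 := mul_pos hb (gfn_pos (1 / d))
    simp only [hF]
    linarith
  obtain ⟨ρ, hρ, hρ1⟩ := intermediate_value_Ioo (by linarith : r ≤ 1)
    (fun x hx => (hcont x (hr0.trans_le hx.1)).continuousWithinAt) ⟨hFr, hF1⟩
  refine ⟨ρ, ⟨⟨hr0.trans hρ.1, hρ.2⟩, ?_⟩, ?_⟩
  · simp only [hF] at hρ1
    linarith
  · rintro y ⟨hy, hy1⟩
    refine hmono.injOn hy.1 (hr0.trans hρ.1) ?_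
    rw [hρ1]
    simp only [hF]
    linarith

/-- `g₁` is a strictly increasing bijection from `ℝ` onto
`(0,∞)`, and for all `π ∈ (0,1)`, `m > 0`, `δ > 0` there is exactly one
`ρ ∈ (0,1)` solving the fixed-point equation for the limiting cosine angle. -/
theorem stmt_11 :
    (StrictMono g1 ∧ Set.BijOn g1 Set.univ (Set.Ioi 0)) ∧
    ∀ p m δ : ℝ, p ∈ Set.Ioo (0 : ℝ) 1 → 0 < m → 0 < δ →
      ∃! ρ : ℝ, ρ ∈ Set.Ioo (0 : ℝ) 1 ∧
        p * δ * gfn (ρ / (2 * p * m * δ)) +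
            (1 - p) * δ * gfn (ρ / (2 * (1 - p) * m * δ)) =
          1 - ρ ^ 2 := by
  refine ⟨⟨g1_strictMono, fun x _ => g1_pos x, g1_strictMono.injective.injOn, fun t ht => ?_⟩, ?_⟩
  · obtain ⟨x, hx⟩ := g1_surj ht
    exact ⟨x, trivial, hx⟩
  · rintro p m δ ⟨hp0, hp1⟩ hm hδ
    have hq : 0 < 1 - p := by linarith
    exact exists_unique_aux _ _ _ _ (by positivity) (by positivity) (by positivity)
      (by positivity)
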